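/- Let X be one of the properties: Pareto optimal, rank-maximal, max-cardinality rank-maximal, fair. (i) There exist a constant c > 0 and n_0 such that for every n ≥ n_0 and every function f assigning to each instance I with n agents and n objects a matching f(I) of G_I satisfying X, there exist an instance I with n agents and n objects and a unit-range valuation profile v consistent with I such that max{SW(μ' | v) : μ' a matching of G_I satisfying X} ≥ c·n·SW(f(I) | v). (ii) This bound is asymptotically tight: for every instance I with n ≥ 2 agents and n objects, every matching μ of G_I satisfying X, and every unit-range valuation profile v consistent with I, max{SW(μ' | v) : μ' a matching of G_I satisfying X} ≤ n·SW(μ | v). -/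

import Mathlib

open Finset
open scoped Classical

/-- A one-sided matching instance with `n` agents and `n` objects.  Agent `i` has a
nonempty acceptable set `accept i` and a weak order `pref i` on it
(`pref i h h'` means agent `i` weakly prefers object `h` to object `h'`). -/
structure OSMInstance (n : ℕ) where
  accept : Fin n → Finset (Fin n)
  accept_nonempty : ∀ i, (accept i).Nonempty
  pref : Fin n → Fin n → Fin n → Prop
  pref_refl : ∀ i h, h ∈ accept i → pref i h h
  pref_trans : ∀ i h₁ h₂ h₃, h₁ ∈ accept i → h₂ ∈ accept i → h₃ ∈ accept i →
    pref i h₁ h₂ → pref i h₂ h₃ → pref i h₁ h₃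
  pref_total : ∀ i h₁ h₂, h₁ ∈ accept i → h₂ ∈ accept i → pref i h₁ h₂ ∨ pref i h₂ h₁

namespace OSMInstance

variable {n : ℕ}

/-- Agent `i` strictly prefers object `h` to object `h'`. -/
def strictPref (I : OSMInstance n) (i h h' : Fin n) : Prop :=
  I.pref i h h' ∧ ¬ I.pref i h' h

/-- The rank of the edge `(i, h)` of `G_I`: one plus the number of acceptable objects
that agent `i` strictly prefers to `h`. -/
noncomputable def edgeRank (I : OSMInstance n) (e : Fin n × Fin n) : ℕ :=
  ((I.accept e.1).filter (fun h' => I.strictPref e.1 h' e.2)).card + 1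

/-- A matching of `G_I`: a set of acceptable (agent, object) pairs in which every agent
and every object occurs at most once. -/
def IsMatching (I : OSMInstance n) (μ : Finset (Fin n × Fin n)) : Prop :=
  (∀ e ∈ μ, e.2 ∈ I.accept e.1) ∧
  (∀ e ∈ μ, ∀ e' ∈ μ, e.1 = e'.1 → e = e') ∧
  (∀ e ∈ μ, ∀ e' ∈ μ, e.2 = e'.2 → e = e')

/-- Total weight of a set of edges under the edge weights `w`. -/
def weightSum (w : Fin n × Fin n → ℝ) (μ : Finset (Fin n × Fin n)) : ℝ :=
  ∑ e ∈ μ, w e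

/-- Social welfare of the set of edges `μ` under the valuation profile `v`. -/
def SW (_I : OSMInstance n) (v : Fin n → Fin n → ℝ) (μ : Finset (Fin n × Fin n)) : ℝ :=
  ∑ e ∈ μ, v e.1 e.2

/-- `μ` is a maximum-weight matching of `G_I` with respect to edge weights `w`. -/
def IsMaxWeightMatching (I : OSMInstance n) (w : Fin n × Fin n → ℝ)
    (μ : Finset (Fin n × Fin n)) : Prop :=
  I.IsMatching μ ∧ ∀ μ', I.IsMatching μ' → weightSum w μ' ≤ weightSum w μ

/-- `μ` is a priority-`p` matching: a maximum-weight matching when every rank-`r` edge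
gets weight `p r`. -/
noncomputable def IsPriorityMatching (I : OSMInstance n) (p : ℕ → ℝ)
    (μ : Finset (Fin n × Fin n)) : Prop :=
  I.IsMaxWeightMatching (fun e => p (I.edgeRank e)) μ

/-- `v` is a valuation profile consistent with the instance: values lie in `[0,1]`,
unacceptable objects have value `0`, and on acceptable objects the values represent
the weak order. -/
def Consistent (I : OSMInstance n) (v : Fin n → Fin n → ℝ) : Prop :=
  (∀ i h, 0 ≤ v i h ∧ v i h ≤ 1) ∧
  (∀ i h, h ∉ I.accept i → v i h = 0) ∧
  (∀ i h h', h ∈ I.accept i → h' ∈ I.accept i → (I.pref i h h' ↔ v i h' ≤ v i h))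

/-- Unit-sum valuations: each agent's values over acceptable objects sum to `1`. -/
def UnitSum (I : OSMInstance n) (v : Fin n → Fin n → ℝ) : Prop :=
  ∀ i, ∑ h ∈ I.accept i, v i h = 1

/-- Unit-range valuations: each agent values some acceptable object `1`, some
acceptable object `0`, and has two non-equivalent acceptable objects. -/
def UnitRange (I : OSMInstance n) (v : Fin n → Fin n → ℝ) : Prop :=
  ∀ i, (∃ h ∈ I.accept i, v i h = 1) ∧ (∃ h ∈ I.accept i, v i h = 0) ∧
    ∃ h ∈ I.accept i, ∃ h' ∈ I.accept i, I.strictPref i h h'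

/-- Agent `i` is unmatched in `μ`. -/
def Unmatched (_I : OSMInstance n) (μ : Finset (Fin n × Fin n)) (i : Fin n) : Prop :=
  ∀ h, (i, h) ∉ μ

/-- Agent `i` weakly prefers their allocation in `μ'` to their allocation in `μ`
(being unmatched is strictly worse than receiving any acceptable object). -/
def WeakImprove (I : OSMInstance n) (μ' μ : Finset (Fin n × Fin n)) (i : Fin n) : Prop :=
  I.Unmatched μ i ∨ ∃ h h', (i, h) ∈ μ ∧ (i, h') ∈ μ' ∧ I.pref i h' h

/-- Agent `i` strictly prefers their allocation in `μ'` to their allocation in `μ`. -/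
def StrictImprove (I : OSMInstance n) (μ' μ : Finset (Fin n × Fin n)) (i : Fin n) : Prop :=
  (I.Unmatched μ i ∧ ∃ h', (i, h') ∈ μ') ∨
    ∃ h h', (i, h) ∈ μ ∧ (i, h') ∈ μ' ∧ I.strictPref i h' h

/-- `μ` is a Pareto optimal matching of `G_I`. -/
def ParetoOptimal (I : OSMInstance n) (μ : Finset (Fin n × Fin n)) : Prop :=
  I.IsMatching μ ∧
    ¬ ∃ μ', I.IsMatching μ' ∧ (∀ i, I.WeakImprove μ' μ i) ∧ ∃ i, I.StrictImprove μ' μ i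

/-- `sig I μ r` is the number of rank-`r` edges of `μ` (as an integer). -/
noncomputable def sig (I : OSMInstance n) (μ : Finset (Fin n × Fin n)) (r : ℕ) : ℤ :=
  ((μ.filter (fun e => I.edgeRank e = r)).card : ℤ)

end OSMInstance

/-- Lexicographic comparison `f ≤ g` of the length-`len` tuples `(f 0, …, f (len-1))`
and `(g 0, …, g (len-1))`. -/
def LexLe (len : ℕ) (f g : ℕ → ℤ) : Prop :=
  (∀ j < len, f j = g j) ∨ ∃ j < len, (∀ i < j, f i = g i) ∧ f j < g j

namespace OSMInstance

variable {n : ℕ}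

/-- `μ` is a rank-maximal matching: it lexicographically maximizes `(s_1, …, s_n)`. -/
noncomputable def RankMaximal (I : OSMInstance n) (μ : Finset (Fin n × Fin n)) : Prop :=
  I.IsMatching μ ∧ ∀ μ', I.IsMatching μ' →
    LexLe n (fun j => I.sig μ' (j + 1)) (fun j => I.sig μ (j + 1))

/-- `μ` is a max-cardinality rank-maximal matching: it lexicographically maximizes
`(Σ_i s_i, s_1, …, s_n)`. -/
noncomputable def MaxCardRankMaximal (I : OSMInstance n) (μ : Finset (Fin n × Fin n)) : Prop :=
  I.IsMatching μ ∧ ∀ μ', I.IsMatching μ' →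
    LexLe (n + 1) (fun j => if j = 0 then (μ'.card : ℤ) else I.sig μ' j)
      (fun j => if j = 0 then (μ.card : ℤ) else I.sig μ j)

/-- `μ` is a fair matching: it lexicographically maximizes
`(Σ_i s_i, -s_n, -s_(n-1), …, -s_1)`. -/
noncomputable def FairMatching (I : OSMInstance n) (μ : Finset (Fin n × Fin n)) : Prop :=
  I.IsMatching μ ∧ ∀ μ', I.IsMatching μ' →
    LexLe (n + 1) (fun j => if j = 0 then (μ'.card : ℤ) else -I.sig μ' (n + 1 - j))
      (fun j => if j = 0 then (μ.card : ℤ) else -I.sig μ (n + 1 - j))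

end OSMInstance

/-- The priority vector for rank-maximal matchings: a rank-`r` edge gets weight
`n ^ (2 * (n - r + 1))`. -/
noncomputable def pRankMaximal (n : ℕ) : ℕ → ℝ :=
  fun r => (n : ℝ) ^ (2 * (n - r + 1))

/-- The priority vector for max-cardinality rank-maximal matchings: a rank-`r` edge gets
weight `n ^ (2 * n) + n ^ (2 * (n - r))`. -/
noncomputable def pMaxCardRankMaximal (n : ℕ) : ℕ → ℝ :=
  fun r => (n : ℝ) ^ (2 * n) + (n : ℝ) ^ (2 * (n - r))

/-- The priority vector for fair matchings: a rank-`r` edge gets weight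
`4 * n ^ (2 * n) - 2 * n ^ (r - 1)`. -/
noncomputable def pFairVec (n : ℕ) : ℕ → ℝ :=
  fun r => 4 * (n : ℝ) ^ (2 * n) - 2 * (n : ℝ) ^ (r - 1)

/-- The set `𝕡` of the three priority vectors of interest. -/
noncomputable def PrioritySet (n : ℕ) : Set (ℕ → ℝ) :=
  {pRankMaximal n, pMaxCardRankMaximal n, pFairVec n}

/-- The four matching properties considered: Pareto optimal, rank-maximal,
max-cardinality rank-maximal, and fair. -/
inductive MatchProp where
  | po | rm | mcrm | fair

/-- `μ` satisfies the property `X` with respect to the instance `I`. -/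
noncomputable def SatisfiesProp {n : ℕ} (X : MatchProp) (I : OSMInstance n)
    (μ : Finset (Fin n × Fin n)) : Prop :=
  match X with
  | .po => I.ParetoOptimal μ
  | .rm => I.RankMaximal μ
  | .mcrm => I.MaxCardRankMaximal μ
  | .fair => I.FairMatching μ

namespace OSMInstance

variable {n : ℕ}

theorem edgeRank_pos (I : OSMInstance n) (e : Fin n × Fin n) : 0 < I.edgeRank e :=
  Nat.succ_pos _

theorem edgeRank_le (I : OSMInstance n) {e : Fin n × Fin n} (he : e.2 ∈ I.accept e.1) :
    I.edgeRank e ≤ n := by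
  have hlt : ((I.accept e.1).filter fun h' => I.strictPref e.1 h' e.2).card
      < (Finset.univ : Finset (Fin n)).card := by
    refine Finset.card_lt_card (Finset.ssubset_univ_iff.mpr fun h => ?_)
    have hmem : e.2 ∈ (I.accept e.1).filter fun h' => I.strictPref e.1 h' e.2 :=
      h ▸ Finset.mem_univ _
    exact (Finset.mem_filter.mp hmem).2.2 (I.pref_refl _ _ he)
  rw [Finset.card_univ, Fintype.card_fin] at hlt
  exact hlt

theorem edgeRank_le_of_pref (I : OSMInstance n) {i h h' : Fin n} (hh : h ∈ I.accept i)
    (hh' : h' ∈ I.accept i) (hp : I.pref i h' h) : I.edgeRank (i, h') ≤ I.edgeRank (i, h) := by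
  refine Nat.succ_le_succ (Finset.card_le_card fun x hx => ?_)
  obtain ⟨hx, hxh, hnx⟩ := Finset.mem_filter.mp hx
  exact Finset.mem_filter.mpr ⟨hx, I.pref_trans i x h' h hx hh' hh hxh hp,
    fun hhx => hnx (I.pref_trans i h' h x hh' hh hx hp hhx)⟩

theorem edgeRank_lt_of_strictPref (I : OSMInstance n) {i h h' : Fin n} (hh : h ∈ I.accept i)
    (hh' : h' ∈ I.accept i) (hp : I.strictPref i h' h) :
    I.edgeRank (i, h') < I.edgeRank (i, h) := by
  refine Nat.succ_lt_succ (Finset.card_lt_card ((Finset.ssubset_iff_of_subset fun x hx => ?_).mpr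
    ⟨h', Finset.mem_filter.mpr ⟨hh', hp⟩, fun hx =>
      (Finset.mem_filter.mp hx).2.2 (I.pref_refl _ _ hh')⟩))
  obtain ⟨hx, hxh, hnx⟩ := Finset.mem_filter.mp hx
  exact Finset.mem_filter.mpr ⟨hx, I.pref_trans i x h' h hx hh' hh hxh hp.1,
    fun hhx => hnx (I.pref_trans i h' h x hh' hh hx hp.1 hhx)⟩

/-- The rank of the object assigned to agent `i` by `μ`, and `n + 1` if `i` is unmatched. -/
noncomputable def agentRank (I : OSMInstance n) (μ : Finset (Fin n × Fin n)) (i : Fin n) : ℕ :=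
  if h : ∃ h, (i, h) ∈ μ then I.edgeRank (i, h.choose) else n + 1

theorem IsMatching.agentRank_eq {I : OSMInstance n} {μ : Finset (Fin n × Fin n)}
    (hμ : I.IsMatching μ) {e : Fin n × Fin n} (he : e ∈ μ) :
    I.agentRank μ e.1 = I.edgeRank e := by
  have hex : ∃ h, (e.1, h) ∈ μ := ⟨e.2, he⟩
  rw [agentRank, dif_pos hex]
  exact congrArg I.edgeRank (hμ.2.1 _ hex.choose_spec e he rfl)

theorem agentRank_of_unmatched {I : OSMInstance n} {μ : Finset (Fin n × Fin n)} {i : Fin n}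
    (hi : I.Unmatched μ i) : I.agentRank μ i = n + 1 :=
  dif_neg fun ⟨h, hh⟩ => hi h hh

theorem agentRank_pos (I : OSMInstance n) (μ : Finset (Fin n × Fin n)) (i : Fin n) :
    0 < I.agentRank μ i := by
  unfold agentRank
  split
  · exact I.edgeRank_pos _
  · exact Nat.succ_pos n

theorem IsMatching.agentRank_le {I : OSMInstance n} {μ : Finset (Fin n × Fin n)}
    (hμ : I.IsMatching μ) (i : Fin n) : I.agentRank μ i ≤ n + 1 := by
  unfold agentRank
  split
  · next h => exact (I.edgeRank_le (hμ.1 _ h.choose_spec)).trans (Nat.le_succ n)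
  · exact le_rfl

theorem exists_mem_of_agentRank_ne {I : OSMInstance n} {μ : Finset (Fin n × Fin n)}
    {i : Fin n} (hi : I.agentRank μ i ≠ n + 1) : ∃ h, (i, h) ∈ μ := by
  by_contra hcon
  exact hi (dif_neg hcon)

theorem IsMatching.sig_eq_card {I : OSMInstance n} {μ : Finset (Fin n × Fin n)}
    (hμ : I.IsMatching μ) {r : ℕ} (hr : r ≠ n + 1) :
    I.sig μ r = (Finset.univ.filter fun i => I.agentRank μ i = r).card := by
  refine congrArg _ (Finset.card_bij (fun e _ => e.1) ?_ ?_ ?_)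
  · intro e he
    obtain ⟨he, her⟩ := Finset.mem_filter.mp he
    simpa [hμ.agentRank_eq he] using her
  · intro e he e' he' h
    exact hμ.2.1 e (Finset.mem_filter.mp he).1 e' (Finset.mem_filter.mp he').1 h
  · intro i hi
    have hi : I.agentRank μ i = r := by simpa using hi
    obtain ⟨h, hh⟩ := exists_mem_of_agentRank_ne (hi.trans_ne hr)
    exact ⟨(i, h), Finset.mem_filter.mpr ⟨hh, (hμ.agentRank_eq hh).symm.trans hi⟩, rfl⟩

theorem IsMatching.card_add_card_unmatched {I : OSMInstance n} {μ : Finset (Fin n × Fin n)}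
    (hμ : I.IsMatching μ) :
    μ.card + (Finset.univ.filter fun i => I.agentRank μ i = n + 1).card = n := by
  have hcard : μ.card = (Finset.univ.filter fun i => ¬ I.agentRank μ i = n + 1).card := by
    refine Finset.card_bij (fun e _ => e.1) ?_ ?_ ?_
    · intro e he
      have := I.edgeRank_le (hμ.1 e he)
      simp only [Finset.mem_filter, Finset.mem_univ, true_and, hμ.agentRank_eq he]
      omega
    · exact fun e he e' he' h => hμ.2.1 e he e' he' h
    · intro i hi
      obtain ⟨h, hh⟩ := exists_mem_of_agentRank_ne (Finset.mem_filter.mp hi).2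
      exact ⟨(i, h), hh, rfl⟩
  have := Finset.card_filter_add_card_filter_not
    (s := (Finset.univ : Finset (Fin n))) (fun i => I.agentRank μ i = n + 1)
  rw [Finset.card_univ, Fintype.card_fin] at this
  omega

theorem WeakImprove.agentRank_le {I : OSMInstance n} {μ μ' : Finset (Fin n × Fin n)}
    (hμ : I.IsMatching μ) (hμ' : I.IsMatching μ') {i : Fin n} (hi : I.WeakImprove μ' μ i) :
    I.agentRank μ' i ≤ I.agentRank μ i := by
  rcases hi with hi | ⟨h, h', hh, hh', hp⟩
  · rw [agentRank_of_unmatched hi]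
    exact hμ'.agentRank_le i
  · have h₁ := hμ.agentRank_eq hh
    have h₂ := hμ'.agentRank_eq hh'
    exact h₂.trans_le ((I.edgeRank_le_of_pref (hμ.1 (i, h) hh) (hμ'.1 (i, h') hh') hp).trans_eq
      h₁.symm)

theorem StrictImprove.agentRank_lt {I : OSMInstance n} {μ μ' : Finset (Fin n × Fin n)}
    (hμ : I.IsMatching μ) (hμ' : I.IsMatching μ') {i : Fin n} (hi : I.StrictImprove μ' μ i) :
    I.agentRank μ' i < I.agentRank μ i := by
  rcases hi with ⟨hi, h', hh'⟩ | ⟨h, h', hh, hh', hp⟩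
  · rw [agentRank_of_unmatched hi]
    exact (hμ'.agentRank_eq hh').trans_lt (Nat.lt_succ_of_le (I.edgeRank_le (hμ'.1 _ hh')))
  · have h₁ := hμ.agentRank_eq hh
    have h₂ := hμ'.agentRank_eq hh'
    exact h₂.trans_lt ((I.edgeRank_lt_of_strictPref (hμ.1 (i, h) hh) (hμ'.1 (i, h') hh') hp).trans_eq
      h₁.symm)

end OSMInstance

/-- If `r' ≤ r` pointwise and the two differ, then the level sets of `r'` and `r` agree in size
below some value `k` attained by `r'` at a point of strict decrease, and at `k` the level set of
`r'` is larger. -/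
theorem exists_least_card_level_lt {ι : Type*} [Fintype ι] {r r' : ι → ℕ}
    (hle : ∀ i, r' i ≤ r i) (hlt : ∃ i, r' i < r i) :
    ∃ i, r' i < r i ∧
      (∀ j < r' i, (Finset.univ.filter fun x => r x = j).card
        = (Finset.univ.filter fun x => r' x = j).card) ∧
      (Finset.univ.filter fun x => r x = r' i).card
        < (Finset.univ.filter fun x => r' x = r' i).card := by
  obtain ⟨i, hi, hmin⟩ := Finset.exists_min_image (Finset.univ.filter fun x => r' x < r x) r'
    (by obtain ⟨i, hi⟩ := hlt; exact ⟨i, by simpa using hi⟩)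
  simp only [Finset.mem_filter, Finset.mem_univ, true_and] at hi hmin
  refine ⟨i, hi, fun j hj => ?_, Finset.card_lt_card ((Finset.ssubset_iff_of_subset ?_).mpr
    ⟨i, by simp, by simpa using hi.ne'⟩)⟩
  · congr 1
    ext x
    have h₁ := hmin x
    have h₂ := hle x
    simp only [Finset.mem_filter, Finset.mem_univ, true_and]
    omega
  · intro x
    have h₁ := hmin x
    have h₂ := hle x
    simp only [Finset.mem_filter, Finset.mem_univ, true_and]
    omega

/-- If `r' ≤ r` pointwise and the two differ, then the level sets of `r'` and `r` agree in size
above some value `k` attained by `r` at a point of strict decrease, and at `k` the level set of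
`r'` is smaller. -/
theorem exists_greatest_card_level_lt {ι : Type*} [Fintype ι] {r r' : ι → ℕ}
    (hle : ∀ i, r' i ≤ r i) (hlt : ∃ i, r' i < r i) :
    ∃ i, r' i < r i ∧
      (∀ j > r i, (Finset.univ.filter fun x => r x = j).card
        = (Finset.univ.filter fun x => r' x = j).card) ∧
      (Finset.univ.filter fun x => r' x = r i).card
        < (Finset.univ.filter fun x => r x = r i).card := by
  obtain ⟨i, hi, hmax⟩ := Finset.exists_max_image (Finset.univ.filter fun x => r' x < r x) r
    (by obtain ⟨i, hi⟩ := hlt; exact ⟨i, by simpa using hi⟩)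
  simp only [Finset.mem_filter, Finset.mem_univ, true_and] at hi hmax
  refine ⟨i, hi, fun j hj => ?_, Finset.card_lt_card ((Finset.ssubset_iff_of_subset ?_).mpr
    ⟨i, by simp, by simpa using hi.ne⟩)⟩
  · congr 1
    ext x
    have h₁ := hmax x
    have h₂ := hle x
    simp only [Finset.mem_filter, Finset.mem_univ, true_and]
    omega
  · intro x
    have h₁ := hmax x
    have h₂ := hle x
    simp only [Finset.mem_filter, Finset.mem_univ, true_and]
    omega

theorem not_lexLe_of_lt {len k : ℕ} {f g : ℕ → ℤ} (hk : k < len) (heq : ∀ j < k, f j = g j)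
    (hlt : g k < f k) : ¬ LexLe len f g := by
  rintro (h | ⟨j, -, hj, hjlt⟩)
  · exact hlt.ne' (h k hk)
  · rcases lt_trichotomy j k with h | rfl | h
    · exact hjlt.ne (heq j h)
    · exact hlt.not_gt hjlt
    · exact hlt.ne' (hj k h)

theorem lexLe_of_le {len : ℕ} {f g : ℕ → ℤ} (h : ∀ j < len, f j ≤ g j) : LexLe len f g := by
  by_contra hcon
  have hex : ∃ j, j < len ∧ f j ≠ g j := by
    by_contra! hall
    exact hcon (Or.inl hall)
  have hspec := Nat.find_spec hex
  refine hcon (Or.inr ⟨Nat.find hex, hspec.1, fun i hi => ?_, (h _ hspec.1).lt_of_ne hspec.2⟩)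
  by_contra hne
  exact Nat.find_min hex hi ⟨hi.trans hspec.1, hne⟩

namespace OSMInstance

variable {n : ℕ}

theorem RankMaximal.paretoOptimal {I : OSMInstance n} {μ : Finset (Fin n × Fin n)}
    (h : I.RankMaximal μ) : I.ParetoOptimal μ := by
  refine ⟨h.1, fun ⟨μ', hμ', hweak, i₀, hstrict⟩ => ?_⟩
  obtain ⟨i, hi, heq, hlt⟩ := exists_least_card_level_lt
    (fun i => (hweak i).agentRank_le h.1 hμ') ⟨i₀, hstrict.agentRank_lt h.1 hμ'⟩
  have hpos := I.agentRank_pos μ' i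
  have hle := h.1.agentRank_le i
  refine not_lexLe_of_lt (k := I.agentRank μ' i - 1) (by omega) (fun j hj => ?_) ?_ (h.2 μ' hμ')
  · rw [h.1.sig_eq_card (by omega), hμ'.sig_eq_card (by omega), heq _ (by omega)]
  · rw [h.1.sig_eq_card (by omega), hμ'.sig_eq_card (by omega), Nat.sub_add_cancel hpos]
    exact_mod_cast hlt

theorem MaxCardRankMaximal.paretoOptimal {I : OSMInstance n} {μ : Finset (Fin n × Fin n)}
    (h : I.MaxCardRankMaximal μ) : I.ParetoOptimal μ := by
  refine ⟨h.1, fun ⟨μ', hμ', hweak, i₀, hstrict⟩ => ?_⟩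
  have hrank := fun i => (hweak i).agentRank_le h.1 hμ'
  obtain ⟨i, hi, heq, hlt⟩ := exists_least_card_level_lt hrank
    ⟨i₀, hstrict.agentRank_lt h.1 hμ'⟩
  have hpos := I.agentRank_pos μ' i
  have hle := h.1.agentRank_le i
  have hcard : μ.card ≤ μ'.card := by
    have h₁ := h.1.card_add_card_unmatched
    have h₂ := hμ'.card_add_card_unmatched
    have h₃ : (Finset.univ.filter fun i => I.agentRank μ' i = n + 1).card
        ≤ (Finset.univ.filter fun i => I.agentRank μ i = n + 1).card := by
      refine Finset.card_le_card fun x => ?_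
      have h₄ := hrank x
      have h₅ := h.1.agentRank_le x
      simp only [Finset.mem_filter, Finset.mem_univ, true_and]
      omega
    omega
  rcases hcard.lt_or_eq with hcard | hcard
  · exact not_lexLe_of_lt (k := 0) (by omega) (by simp) (by simpa using hcard) (h.2 μ' hμ')
  · refine not_lexLe_of_lt (k := I.agentRank μ' i) (by omega) (fun j hj => ?_) ?_ (h.2 μ' hμ')
    · split
      · rw [hcard]
      · rw [h.1.sig_eq_card (by omega), hμ'.sig_eq_card (by omega), heq _ hj]
    · rw [if_neg hpos.ne', if_neg hpos.ne', h.1.sig_eq_card (by omega),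
        hμ'.sig_eq_card (by omega)]
      exact_mod_cast hlt

theorem FairMatching.paretoOptimal {I : OSMInstance n} {μ : Finset (Fin n × Fin n)}
    (h : I.FairMatching μ) : I.ParetoOptimal μ := by
  refine ⟨h.1, fun ⟨μ', hμ', hweak, i₀, hstrict⟩ => ?_⟩
  obtain ⟨i, hi, heq, hlt⟩ := exists_greatest_card_level_lt
    (fun i => (hweak i).agentRank_le h.1 hμ') ⟨i₀, hstrict.agentRank_lt h.1 hμ'⟩
  have hpos := I.agentRank_pos μ' i
  have h₁ := h.1.card_add_card_unmatched
  have h₂ := hμ'.card_add_card_unmatched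
  rcases (h.1.agentRank_le i).lt_or_eq with hle | hle
  · have hun := heq (n + 1) hle
    refine not_lexLe_of_lt (k := n + 1 - I.agentRank μ i) (by omega) (fun j hj => ?_) ?_
      (h.2 μ' hμ')
    · split
      · omega
      · rw [h.1.sig_eq_card (by omega), hμ'.sig_eq_card (by omega), heq _ (by omega)]
    · rw [if_neg (by omega), if_neg (by omega), h.1.sig_eq_card (by omega),
        hμ'.sig_eq_card (by omega), Nat.sub_sub_self hle.le]
      omega
  · rw [hle] at hlt
    refine not_lexLe_of_lt (k := 0) (by omega) (by simp) ?_ (h.2 μ' hμ')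
    simp only [if_true]
    omega

end OSMInstance

theorem SatisfiesProp.paretoOptimal {n : ℕ} {X : MatchProp} {I : OSMInstance n}
    {μ : Finset (Fin n × Fin n)} (h : SatisfiesProp X I μ) : I.ParetoOptimal μ := by
  cases X with
  | po => exact h
  | rm => exact OSMInstance.RankMaximal.paretoOptimal h
  | mcrm => exact OSMInstance.MaxCardRankMaximal.paretoOptimal h
  | fair => exact OSMInstance.FairMatching.paretoOptimal h

/-- A self-map of a nonempty finite type permutes some nonempty finite set. -/
theorem exists_nonempty_mapsTo_injOn {α : Type*} [Fintype α] [Nonempty α] (g : α → α) :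
    ∃ C : Finset α, C.Nonempty ∧ (∀ i ∈ C, g i ∈ C) ∧ Set.InjOn g C := by
  obtain ⟨C, hC, hmin⟩ := Finset.exists_min_image
    (Finset.univ.filter fun C : Finset α => C.Nonempty ∧ ∀ i ∈ C, g i ∈ C) Finset.card
    ⟨Finset.univ, by simp [Finset.univ_nonempty]⟩
  simp only [Finset.mem_filter, Finset.mem_univ, true_and] at hC hmin
  refine ⟨C, hC.1, hC.2, Finset.card_image_iff.mp (Finset.card_image_le.antisymm (hmin _ ?_))⟩
  refine ⟨hC.1.image g, fun i hi => ?_⟩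
  obtain ⟨j, hj, rfl⟩ := Finset.mem_image.mp hi
  exact Finset.mem_image_of_mem g (hC.2 j hj)

namespace OSMInstance

variable {n : ℕ}

/-- In a Pareto optimal matching no nonempty group of agents can simultaneously move to strictly
better distinct objects taken from the group itself or from the unassigned ones. -/
theorem ParetoOptimal.not_exists_improving_group {I : OSMInstance n}
    {μ : Finset (Fin n × Fin n)} (hμ : I.ParetoOptimal μ) {t : Fin n → Fin n}
    (ht : ∀ i, t i ∈ I.accept i) (hbetter : ∀ i h, (i, h) ∈ μ → I.strictPref i (t i) h)
    {C : Finset (Fin n)} (hinj : Set.InjOn t C)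
    (hclosed : ∀ i ∈ C, ∀ k, (k, t i) ∈ μ → k ∈ C) : ¬ C.Nonempty := by
  rintro ⟨i₀, hi₀⟩
  obtain ⟨⟨hacc, hagent, hobj⟩, hopt⟩ := hμ
  have hmem : ∀ e : Fin n × Fin n, e ∈ (μ.filter fun e => e.1 ∉ C) ∪ C.image (fun i => (i, t i)) ↔
      (e ∈ μ ∧ e.1 ∉ C) ∨ (e.1 ∈ C ∧ e.2 = t e.1) := by
    intro e
    simp only [Finset.mem_union, Finset.mem_filter, Finset.mem_image]
    refine or_congr Iff.rfl ⟨?_, fun h => ⟨e.1, h.1, Prod.ext rfl h.2.symm⟩⟩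
    rintro ⟨i, hi, rfl⟩
    exact ⟨hi, rfl⟩
  refine hopt ⟨(μ.filter fun e => e.1 ∉ C) ∪ C.image fun i => (i, t i), ⟨?_, ?_, ?_⟩, ?_, i₀, ?_⟩
  · intro e he
    rcases (hmem e).mp he with he | he
    · exact hacc e he.1
    · exact he.2 ▸ ht e.1
  · intro e he e' he' hee
    rcases (hmem e).mp he with he | he <;> rcases (hmem e').mp he' with he' | he'
    · exact hagent e he.1 e' he'.1 hee
    · exact absurd (hee ▸ he'.1) he.2
    · exact absurd (hee ▸ he.1) he'.2
    · exact Prod.ext hee (by rw [he.2, he'.2, hee])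
  · intro e he e' he' hee
    rcases (hmem e).mp he with he | he <;> rcases (hmem e').mp he' with he' | he'
    · exact hobj e he.1 e' he'.1 hee
    · exact absurd (hclosed e'.1 he'.1 e.1 (he'.2 ▸ hee ▸ he.1)) he.2
    · exact absurd (hclosed e.1 he.1 e'.1 (he.2 ▸ hee ▸ he'.1)) he'.2
    · exact Prod.ext (hinj he.1 he'.1 (he.2 ▸ he'.2 ▸ hee)) hee
  · intro i
    by_cases hi : I.Unmatched μ i
    · exact Or.inl hi
    · simp only [Unmatched, not_forall, not_not] at hi
      obtain ⟨h, hh⟩ := hi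
      by_cases hiC : i ∈ C
      · exact Or.inr ⟨h, t i, hh, (hmem _).mpr (Or.inr ⟨hiC, rfl⟩), (hbetter i h hh).1⟩
      · exact Or.inr ⟨h, h, hh, (hmem _).mpr (Or.inl ⟨hh, hiC⟩), I.pref_refl _ _ (hacc _ hh)⟩
  · by_cases hi : I.Unmatched μ i₀
    · exact Or.inl ⟨hi, t i₀, (hmem _).mpr (Or.inr ⟨hi₀, rfl⟩)⟩
    · simp only [Unmatched, not_forall, not_not] at hi
      obtain ⟨h, hh⟩ := hi
      exact Or.inr ⟨h, t i₀, hh, (hmem _).mpr (Or.inr ⟨hi₀, rfl⟩), hbetter i₀ h hh⟩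

/-- In a Pareto optimal matching some agent receives an object of value `1`. -/
theorem ParetoOptimal.exists_value_eq_one [Nonempty (Fin n)] {I : OSMInstance n}
    {μ : Finset (Fin n × Fin n)} (hμ : I.ParetoOptimal μ) {v : Fin n → Fin n → ℝ}
    (hv : I.Consistent v) (hur : I.UnitRange v) : ∃ e ∈ μ, v e.1 e.2 = 1 := by
  by_contra! hcon
  choose t ht hone using fun i => (hur i).1
  have hbetter : ∀ i h, (i, h) ∈ μ → I.strictPref i (t i) h := by
    intro i h hh
    have hacc := hμ.1.1 _ hh
    have hlt : v i h < v i (t i) := hone i ▸ (hv.1 i h).2.lt_of_ne (hcon _ hh)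
    exact ⟨(hv.2.2 _ _ _ (ht i) hacc).mpr hlt.le,
      fun hp => hlt.not_ge ((hv.2.2 _ _ _ hacc (ht i)).mp hp)⟩
  by_cases hown : ∀ i, ∃ k, (k, t i) ∈ μ
  · choose g hg using hown
    obtain ⟨C, hC, hmaps, hinj⟩ := exists_nonempty_mapsTo_injOn g
    have huniq : ∀ i k, (k, t i) ∈ μ → k = g i := fun i k hk =>
      congrArg Prod.fst (hμ.1.2.2 _ hk _ (hg i) rfl)
    refine hμ.not_exists_improving_group ht hbetter (C := C) (fun i hi j hj hij => ?_)
      (fun i hi k hk => huniq i k hk ▸ hmaps i hi) hC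
    exact hinj hi hj (huniq j (g i) (hij ▸ hg i))
  · push Not at hown
    obtain ⟨i, hi⟩ := hown
    refine hμ.not_exists_improving_group ht hbetter (C := {i}) (by simp) ?_
      (Finset.singleton_nonempty i)
    intro j hj k hk
    exact absurd (Finset.mem_singleton.mp hj ▸ hk) (hi k)

theorem IsMatching.card_le {I : OSMInstance n} {μ : Finset (Fin n × Fin n)}
    (hμ : I.IsMatching μ) : μ.card ≤ n :=
  Nat.le.intro hμ.card_add_card_unmatched

theorem ParetoOptimal.sw_le_mul_sw {I : OSMInstance n} (hn : 0 < n)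
    {μ μ' : Finset (Fin n × Fin n)} (hμ : I.ParetoOptimal μ) (hμ' : I.IsMatching μ')
    {v : Fin n → Fin n → ℝ} (hv : I.Consistent v) (hur : I.UnitRange v) :
    I.SW v μ' ≤ (n : ℝ) * I.SW v μ := by
  have : Nonempty (Fin n) := ⟨⟨0, hn⟩⟩
  obtain ⟨e, he, hone⟩ := hμ.exists_value_eq_one hv hur
  have hlower : 1 ≤ I.SW v μ := hone ▸
    Finset.single_le_sum (f := fun e : Fin n × Fin n => v e.1 e.2)
      (fun e _ => (hv.1 e.1 e.2).1) he
  have hupper : I.SW v μ' ≤ n := by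
    refine (Finset.sum_le_card_nsmul _ _ 1 fun e _ => (hv.1 e.1 e.2).2).trans ?_
    rw [nsmul_one]
    exact_mod_cast hμ'.card_le
  exact hupper.trans (le_mul_of_one_le_right n.cast_nonneg hlower)

end OSMInstance

/-- The instance in which every agent accepts all objects and prefers objects of smaller index. -/
def commonOrder (n : ℕ) : OSMInstance n where
  accept _ := Finset.univ
  accept_nonempty i := ⟨i, Finset.mem_univ i⟩
  pref _ h h' := h ≤ h'
  pref_refl _ h _ := le_refl h
  pref_trans _ _ _ _ _ _ _ := le_trans
  pref_total _ h h' _ _ := le_total h h'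

theorem commonOrder_edgeRank {n : ℕ} (e : Fin n × Fin n) :
    (commonOrder n).edgeRank e = e.2 + 1 := by
  have hfilter : (((commonOrder n).accept e.1).filter
      fun h' => (commonOrder n).strictPref e.1 h' e.2) = Finset.Iio e.2 := by
    ext h
    simp only [commonOrder, OSMInstance.strictPref, Finset.mem_filter, Finset.mem_univ, true_and,
      Finset.mem_Iio, not_le]
    exact ⟨And.right, fun h => ⟨h.le, h⟩⟩
  rw [OSMInstance.edgeRank, hfilter, Fin.card_Iio]

theorem commonOrder_sig_le_one {n : ℕ} {μ : Finset (Fin n × Fin n)}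
    (hμ : (commonOrder n).IsMatching μ) (r : ℕ) : (commonOrder n).sig μ r ≤ 1 := by
  have hcard : (μ.filter fun e => (commonOrder n).edgeRank e = r).card ≤ 1 := by
    refine Finset.card_le_one.mpr fun e he e' he' => ?_
    simp only [Finset.mem_filter, commonOrder_edgeRank] at he he'
    exact hμ.2.2 e he.1 e' he'.1 (Fin.ext (by omega))
  unfold OSMInstance.sig
  exact_mod_cast hcard

theorem commonOrder_sig_eq_one {n : ℕ} {μ : Finset (Fin n × Fin n)}
    (hμ : (commonOrder n).IsMatching μ) (hcard : μ.card = n) {r : ℕ} (hr : 0 < r) (hrn : r ≤ n) :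
    (commonOrder n).sig μ r = 1 := by
  refine (commonOrder_sig_le_one hμ r).antisymm ?_
  have himage : μ.image Prod.snd = Finset.univ := by
    rw [← Finset.card_eq_iff_eq_univ, Fintype.card_fin,
      Finset.card_image_of_injOn fun e he e' he' h => hμ.2.2 e he e' he' h, hcard]
  obtain ⟨e, he, her⟩ := Finset.mem_image.mp
    (himage ▸ Finset.mem_univ (⟨r - 1, by omega⟩ : Fin n))
  have hpos : 0 < (μ.filter fun e => (commonOrder n).edgeRank e = r).card := by
    refine Finset.card_pos.mpr ⟨e, Finset.mem_filter.mpr ⟨he, ?_⟩⟩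
    rw [commonOrder_edgeRank, her]
    exact Nat.sub_add_cancel hr
  unfold OSMInstance.sig
  exact_mod_cast hpos

theorem commonOrder_satisfiesProp {n : ℕ} (X : MatchProp) {μ : Finset (Fin n × Fin n)}
    (hμ : (commonOrder n).IsMatching μ) (hcard : μ.card = n) :
    SatisfiesProp X (commonOrder n) μ := by
  have hrm : (commonOrder n).RankMaximal μ := by
    refine ⟨hμ, fun μ' hμ' => lexLe_of_le fun j hj => ?_⟩
    rw [commonOrder_sig_eq_one hμ hcard j.succ_pos hj]
    exact commonOrder_sig_le_one hμ' _
  cases X with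
  | po => exact hrm.paretoOptimal
  | rm => exact hrm
  | mcrm =>
    refine ⟨hμ, fun μ' hμ' => lexLe_of_le fun j hj => ?_⟩
    split
    · exact_mod_cast hμ'.card_le.trans_eq hcard.symm
    · rw [commonOrder_sig_eq_one hμ hcard (by omega) (by omega)]
      exact commonOrder_sig_le_one hμ' _
  | fair =>
    refine ⟨hμ, fun μ' hμ' => ?_⟩
    rcases hμ'.card_le.lt_or_eq with hlt | heq
    · exact Or.inr ⟨0, n.succ_pos, by simp, by simpa [hcard] using hlt⟩
    · refine Or.inl fun j hj => ?_
      dsimp only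
      split
      · rw [hcard, heq]
      · rw [commonOrder_sig_eq_one hμ hcard (by omega) (by omega),
          commonOrder_sig_eq_one hμ' heq (by omega) (by omega)]

/-- A valuation of the objects `0, …, n - 1` decreasing in the index, close to `1` on the first `k`
objects and close to `0` on the others. -/
noncomputable def stepValue (n k h : ℕ) : ℝ :=
  if h < k then 1 - h / (n : ℝ) ^ 2 else (n - 1 - h) / (n : ℝ) ^ 2

theorem stepValue_of_lt {n k h : ℕ} (hk : h < k) : stepValue n k h = 1 - h / (n : ℝ) ^ 2 :=
  if_pos hk

theorem stepValue_of_le {n k h : ℕ} (hk : k ≤ h) :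
    stepValue n k h = (n - 1 - h) / (n : ℝ) ^ 2 :=
  if_neg hk.not_gt

theorem stepValue_le_inv {n k h : ℕ} (hn : 0 < n) (hk : k ≤ h) : stepValue n k h ≤ 1 / n := by
  have hn' : (0 : ℝ) < n := by exact_mod_cast hn
  have hh : (0 : ℝ) ≤ h := h.cast_nonneg
  rw [stepValue_of_le hk, div_le_div_iff₀ (by positivity) hn']
  nlinarith

theorem half_le_stepValue {n k h : ℕ} (hn : 2 ≤ n) (hkn : k < n) (hk : h < k) :
    1 / 2 ≤ stepValue n k h := by
  have hn' : (2 : ℝ) ≤ n := by exact_mod_cast hn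
  have hh : (h : ℝ) ≤ n := by exact_mod_cast (hk.trans hkn).le
  have hdiv : (h : ℝ) / (n : ℝ) ^ 2 ≤ 1 / 2 := by
    rw [div_le_div_iff₀ (by positivity) two_pos]
    nlinarith
  rw [stepValue_of_lt hk]
  linarith

theorem stepValue_strictAnti {n k a b : ℕ} (hb : b < n) (hab : a < b) :
    stepValue n k b < stepValue n k a := by
  have hn' : (0 : ℝ) < n := by exact_mod_cast (by omega : 0 < n)
  have hab' : (a : ℝ) < b := by exact_mod_cast hab
  rcases lt_or_ge b k with hbk | hbk
  · rw [stepValue_of_lt hbk, stepValue_of_lt (hab.trans hbk)]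
    gcongr
  rcases lt_or_ge a k with hak | hak
  · rw [stepValue_of_le hbk, stepValue_of_lt hak, ← sub_pos]
    have hn₁ : (b : ℝ) + 1 ≤ n := by exact_mod_cast hb
    have hn₂ : (1 : ℝ) ≤ n := by exact_mod_cast (by omega : 1 ≤ n)
    have hnum : (0 : ℝ) < (n : ℝ) ^ 2 - a - (n - 1 - b) := by nlinarith
    have hdiv := div_pos hnum (by positivity : (0 : ℝ) < (n : ℝ) ^ 2)
    calc (0 : ℝ) < _ := hdiv
      _ = _ := by field_simp
  · rw [stepValue_of_le hbk, stepValue_of_le hak]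
    gcongr

theorem stepValue_zero {n k : ℕ} (hk : 0 < k) : stepValue n k 0 = 1 := by
  simp [stepValue_of_lt hk]

theorem stepValue_last {n k : ℕ} (hkn : k < n) : stepValue n k (n - 1) = 0 := by
  rw [stepValue_of_le (by omega), Nat.cast_sub (by omega)]
  simp

theorem stepValue_le_iff {n k a b : ℕ} (ha : a < n) (hb : b < n) :
    stepValue n k b ≤ stepValue n k a ↔ a ≤ b := by
  refine ⟨fun h => ?_, fun h => ?_⟩
  · by_contra! hba
    exact h.not_gt (stepValue_strictAnti ha hba)
  · rcases h.lt_or_eq with h | rfl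
    · exact (stepValue_strictAnti hb h).le
    · exact le_rfl

theorem commonOrder_consistent_stepValue {n : ℕ} {k : Fin n → ℕ} (hpos : ∀ i, 0 < k i)
    (hkn : ∀ i, k i < n) :
    (commonOrder n).Consistent fun i h => stepValue n (k i) h := by
  refine ⟨fun i h => ⟨?_, ?_⟩, fun i h hh => absurd (Finset.mem_univ h) hh, fun i h h' _ _ => ?_⟩
  · rw [← stepValue_last (hkn i), stepValue_le_iff h.2 (by have := h.2; omega)]
    have := h.2
    omega
  · rw [← stepValue_zero (n := n) (hpos i), stepValue_le_iff (by have := h.2; omega) h.2]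
    exact Nat.zero_le _
  · exact (stepValue_le_iff h.2 h'.2).symm

theorem commonOrder_unitRange_stepValue {n : ℕ} {k : Fin n → ℕ} (hpos : ∀ i, 0 < k i)
    (hkn : ∀ i, k i < n) :
    (commonOrder n).UnitRange fun i h => stepValue n (k i) h := by
  intro i
  have h₁ := hpos i
  have h₂ := hkn i
  refine ⟨⟨⟨0, by omega⟩, Finset.mem_univ _, stepValue_zero h₁⟩,
    ⟨⟨n - 1, by omega⟩, Finset.mem_univ _, stepValue_last h₂⟩,
    ⟨0, by omega⟩, Finset.mem_univ _, ⟨n - 1, by omega⟩, Finset.mem_univ _, ?_, ?_⟩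
  · exact Fin.mk_le_mk.mpr (Nat.zero_le _)
  · exact fun h => by
      have : n - 1 ≤ 0 := Fin.mk_le_mk.mp h
      omega

/-- If every agent receives the first object or one of value at most `1 / n`, then the welfare is
at most `2`. -/
theorem OSMInstance.IsMatching.sw_le_two {n : ℕ} {I : OSMInstance n} {μ : Finset (Fin n × Fin n)}
    (hμ : I.IsMatching μ) (hn : 0 < n) {v : Fin n → Fin n → ℝ} (hv : I.Consistent v)
    (hlow : ∀ e ∈ μ, (e.2 : ℕ) ≠ 0 → v e.1 e.2 ≤ 1 / n) : I.SW v μ ≤ 2 := by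
  have hn' : (0 : ℝ) < n := by exact_mod_cast hn
  have hterm : ∀ e ∈ μ, v e.1 e.2 ≤ (if (e.2 : ℕ) = 0 then 1 else 0) + 1 / n := by
    intro e he
    split
    · exact (hv.1 e.1 e.2).2.trans (le_add_of_nonneg_right (by positivity))
    · next h => simpa using hlow e he h
  have hfirst : (μ.filter fun e => (e.2 : ℕ) = 0).card ≤ 1 := by
    refine Finset.card_le_one.mpr fun e he e' he' => ?_
    rw [Finset.mem_filter] at he he'
    exact hμ.2.2 e he.1 e' he'.1 (Fin.ext (he.2.trans he'.2.symm))
  have hfirst' : ((μ.filter fun e => (e.2 : ℕ) = 0).card : ℝ) ≤ 1 := by exact_mod_cast hfirst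
  have hrest : (μ.card : ℝ) * (1 / n) ≤ 1 := by
    rw [mul_one_div, div_le_one hn']
    exact_mod_cast hμ.card_le
  refine (Finset.sum_le_sum hterm).trans ?_
  rw [Finset.sum_add_distrib, Finset.sum_boole, Finset.sum_const, nsmul_eq_mul]
  linarith

theorem commonOrder_isMatching_perm {n : ℕ} (τ : Equiv.Perm (Fin n)) :
    (commonOrder n).IsMatching (Finset.univ.image fun h => (τ h, h)) := by
  refine ⟨fun e _ => Finset.mem_univ _, fun e he e' he' hee => ?_, fun e he e' he' hee => ?_⟩ <;>
  · obtain ⟨h, -, rfl⟩ := Finset.mem_image.mp he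
    obtain ⟨h', -, rfl⟩ := Finset.mem_image.mp he'
    simpa using hee

/-- If at least as many agents belong to `A` as objects to `S`, then some assignment gives the
objects of `S` to agents of `A`. -/
theorem exists_perm_mapsTo_of_card_le {α : Type*} [Fintype α] {S A : Finset α}
    (h : S.card ≤ A.card) : ∃ τ : Equiv.Perm α, ∀ x ∈ S, τ x ∈ A := by
  obtain ⟨g⟩ := Function.Embedding.nonempty_of_card_le (α := S) (β := A) (by simpa using h)
  obtain ⟨τ, hτ⟩ := Equiv.Perm.exists_extending_pair (fun x : S => (x : α))
    (fun x : S => (g x : α)) Subtype.val_injective (Subtype.val_injective.comp g.injective)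
  exact ⟨τ, fun x hx => (hτ ⟨x, hx⟩) ▸ (g ⟨x, hx⟩).2⟩

theorem card_filter_val_lt {n m : ℕ} (hm : m ≤ n) :
    (Finset.univ.filter fun h : Fin n => (h : ℕ) < m).card = m := by
  rw [Fin.card_filter_val_lt, min_eq_right hm]

/-- In a matching, all but at most `m` agents receive none of the first `m` objects. -/
theorem OSMInstance.IsMatching.card_agents_without_first {n m : ℕ} {I : OSMInstance n}
    {μ : Finset (Fin n × Fin n)} (hμ : I.IsMatching μ) (hm : m ≤ n) :
    n ≤ (Finset.univ.filter fun i : Fin n => ∀ h : Fin n, (i, h) ∈ μ → m ≤ h).card + m := by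
  have hbad : (Finset.univ.filter fun i : Fin n => ¬ ∀ h : Fin n, (i, h) ∈ μ → m ≤ h).card
      ≤ m := by
    have hex : ∀ i ∈ Finset.univ.filter fun i : Fin n => ¬ ∀ h : Fin n, (i, h) ∈ μ → m ≤ h,
        ∃ h : Fin n, (i, h) ∈ μ ∧ (h : ℕ) < m := by
      intro i hi
      simpa using hi
    choose! g hg using hex
    refine (Finset.card_le_card_of_injOn g (fun i hi => ?_) fun i hi j hj hij => ?_).trans_eq
      (card_filter_val_lt hm)
    · simpa using (hg i hi).2
    · exact congrArg Prod.fst (hμ.2.2 _ (hg i hi).1 _ (hg j hj).1 hij)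
  have hsplit := Finset.card_filter_add_card_filter_not (s := (Finset.univ : Finset (Fin n)))
    (fun i => ∀ h : Fin n, (i, h) ∈ μ → m ≤ h)
  rw [Finset.card_univ, Fintype.card_fin] at hsplit
  omega

/-- Every matching of `commonOrder n` loses a factor `n / 12` against a suitable perfect matching
for suitable unit-range valuations. -/
theorem commonOrder_exists_valuation {n : ℕ} (hn : 2 ≤ n) {μ : Finset (Fin n × Fin n)}
    (hμ : (commonOrder n).IsMatching μ) :
    ∃ v, (commonOrder n).Consistent v ∧ (commonOrder n).UnitRange v ∧
      ∃ μ', (commonOrder n).IsMatching μ' ∧ μ'.card = n ∧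
        1 / 12 * (n : ℝ) * (commonOrder n).SW v μ ≤ (commonOrder n).SW v μ' := by
  set m := n / 2 with hm
  set A := Finset.univ.filter fun i : Fin n => ∀ h : Fin n, (i, h) ∈ μ → m ≤ h with hA
  set k : Fin n → ℕ := fun i => if i ∈ A then m else 1 with hk
  have hkpos : ∀ i, 0 < k i := fun i => by simp only [hk]; split <;> omega
  have hkn : ∀ i, k i < n := fun i => by simp only [hk]; split <;> omega
  have hcons := commonOrder_consistent_stepValue hkpos hkn
  have hAcard : m ≤ A.card := by
    have := hμ.card_agents_without_first (m := m) (by omega)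
    rw [← hA] at this
    omega
  obtain ⟨τ, hτ⟩ := exists_perm_mapsTo_of_card_le
    (S := Finset.univ.filter fun h : Fin n => (h : ℕ) < m)
    ((card_filter_val_lt (by omega)).trans_le hAcard)
  have hinj : Function.Injective fun h => (τ h, h) := fun _ _ h => congrArg Prod.snd h
  refine ⟨_, hcons, commonOrder_unitRange_stepValue hkpos hkn,
    Finset.univ.image fun h => (τ h, h), commonOrder_isMatching_perm τ, ?_, ?_⟩
  · rw [Finset.card_image_of_injective _ hinj, Finset.card_univ, Fintype.card_fin]
  have hupper := hμ.sw_le_two (by omega) hcons (fun e he hne => by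
    refine stepValue_le_inv (by omega) ?_
    simp only [hk]
    split
    · next h => exact (Finset.mem_filter.mp h).2 e.2 he
    · omega)
  have hlower : (m : ℝ) * (1 / 2) ≤ (commonOrder n).SW (fun i h => stepValue n (k i) h)
      (Finset.univ.image fun h => (τ h, h)) := by
    rw [OSMInstance.SW, Finset.sum_image hinj.injOn]
    calc (m : ℝ) * (1 / 2)
        = ∑ h ∈ Finset.univ.filter fun h : Fin n => (h : ℕ) < m, (1 / 2 : ℝ) := by
          rw [Finset.sum_const, card_filter_val_lt (by omega), nsmul_eq_mul]
      _ ≤ ∑ h ∈ Finset.univ.filter fun h : Fin n => (h : ℕ) < m, stepValue n (k (τ h)) h := by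
          refine Finset.sum_le_sum fun h hh => half_le_stepValue hn (hkn _) ?_
          simp only [hk, if_pos (hτ h hh)]
          exact (Finset.mem_filter.mp hh).2
      _ ≤ ∑ h, stepValue n (k (τ h)) h :=
          Finset.sum_le_sum_of_subset_of_nonneg (Finset.subset_univ _)
            fun h _ _ => (hcons.1 (τ h) h).1
  have hmn : (n : ℝ) ≤ 3 * m := by exact_mod_cast (by omega : n ≤ 3 * m)
  have hn' : (0 : ℝ) ≤ n := n.cast_nonneg
  nlinarith

/-- (i) every deterministic ordinal algorithm that always outputs a
matching satisfying `X` loses a factor of `Ω(n)` in welfare on some instance with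
unit-range valuations, and (ii) this is asymptotically tight: any matching satisfying
`X` achieves an `n`-approximation to the optimal welfare among matchings satisfying
`X`. -/
theorem ordinal_unitRange_bounds (X : MatchProp) :
    (∃ c : ℝ, 0 < c ∧ ∃ n₀ : ℕ, ∀ n : ℕ, n₀ ≤ n →
      ∀ f : OSMInstance n → Finset (Fin n × Fin n),
        (∀ I : OSMInstance n, SatisfiesProp X I (f I)) →
        ∃ I : OSMInstance n, ∃ v : Fin n → Fin n → ℝ,
          I.Consistent v ∧ I.UnitRange v ∧
          ∃ μ', SatisfiesProp X I μ' ∧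
            c * (n : ℝ) * I.SW v (f I) ≤ I.SW v μ') ∧
    (∀ n : ℕ, 2 ≤ n → ∀ I : OSMInstance n,
      ∀ μ, SatisfiesProp X I μ →
      ∀ v : Fin n → Fin n → ℝ, I.Consistent v → I.UnitRange v →
      ∀ μ', SatisfiesProp X I μ' →
        I.SW v μ' ≤ (n : ℝ) * I.SW v μ) := by
  refine ⟨⟨1 / 12, by norm_num, 2, fun n hn f hf => ?_⟩, fun n hn I μ hμ v hv hur μ' hμ' => ?_⟩
  · obtain ⟨v, hv, hur, μ', hμ', hcard, hle⟩ :=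
      commonOrder_exists_valuation hn (hf (commonOrder n)).paretoOptimal.1
    exact ⟨commonOrder n, v, hv, hur, μ', commonOrder_satisfiesProp X hμ' hcard, hle⟩
  · exact hμ.paretoOptimal.sw_le_mul_sw (by omega) hμ'.paretoOptimal.1 hv hur
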